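/- Let X_1, …, X_n be upper extended negatively dependent random variables in a sub-linear expectation space with dominating constant K ≥ 1 and 𝔼[X_k] ≤ 0 for each k. Set S_n = Σ_{k=1}^n X_k and B_n = Σ_{k=1}^n 𝔼[X_k²]. Then for all x > 0: 𝕍(S_n ≥ x) ≤ (1 + K·e)·B_n/x². -/

import Mathlib

open Filter MeasureTheory
open scoped ENNReal NNReal

noncomputable section

/-- A sub-linear expectation on `Ω`: a monotone, constant-preserving, sub-additive,
positively homogeneous functional on real random variables (with values in the
extended reals, so that random variables without a finite expectation are allowed). -/
structure SublinearExp (Ω : Type) where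
  E : (Ω → ℝ) → EReal
  mono : ∀ X Y : Ω → ℝ, (∀ ω, X ω ≤ Y ω) → E X ≤ E Y
  const_eq : ∀ c : ℝ, E (fun _ => c) = (c : EReal)
  subadd : ∀ X Y : Ω → ℝ, E (fun ω => X ω + Y ω) ≤ E X + E Y
  pos_homog : ∀ lam : ℝ, 0 ≤ lam → ∀ X : Ω → ℝ,
    E (fun ω => lam * X ω) = (lam : EReal) * E X

namespace SublinearExp

variable {Ω : Type}

/-- The conjugate expectation `ℰ[X] := −𝔼[−X]`. -/
def cE (SL : SublinearExp Ω) (X : Ω → ℝ) : EReal := - SL.E fun ω => - X ω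

/-- The upper capacity `𝕍(A) := inf{𝔼[ξ] : 1_A ≤ ξ}`. -/
def V (SL : SublinearExp Ω) (A : Set Ω) : ℝ :=
  sInf {x : ℝ | ∃ ξ : Ω → ℝ,
    (∀ ω, A.indicator (fun _ => (1 : ℝ)) ω ≤ ξ ω) ∧ SL.E ξ = (x : EReal)}

/-- The lower capacity `𝓋(A) := 1 − 𝕍(Aᶜ)`. -/
def vLow (SL : SublinearExp Ω) (A : Set Ω) : ℝ := 1 - SL.V Aᶜ

/-- The Choquet integral `C_𝕍(X) := ∫₀^∞ 𝕍(X ≥ t) dt` (of a non-negative r.v.). -/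
def Choquet (SL : SublinearExp Ω) (X : Ω → ℝ) : ℝ≥0∞ :=
  ∫⁻ t in Set.Ioi (0 : ℝ), ENNReal.ofReal (SL.V {ω | t ≤ X ω})

/-- The outer capacity `𝕍*(A) := inf{Σ_n 𝕍(A_n) : A ⊆ ∪_n A_n}`. -/
def Vout (SL : SublinearExp Ω) (A : Set Ω) : ℝ≥0∞ :=
  ⨅ (B : ℕ → Set Ω) (_ : A ⊆ ⋃ n, B n), ∑' n, ENNReal.ofReal (SL.V (B n))

/-- The upper capacity is continuous: continuous from below and from above. -/
def ContinuousCapacity (SL : SublinearExp Ω) : Prop :=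
  (∀ A : ℕ → Set Ω, Monotone A →
    Tendsto (fun n => SL.V (A n)) atTop (nhds (SL.V (⋃ n, A n)))) ∧
  (∀ A : ℕ → Set Ω, Antitone A →
    Tendsto (fun n => SL.V (A n)) atTop (nhds (SL.V (⋂ n, A n))))

/-- Bounded Lipschitz function on ℝ. -/
def IsBLip (g : ℝ → ℝ) : Prop :=
  (∃ L : NNReal, LipschitzWith L g) ∧ ∃ M : ℝ, ∀ x, |g x| ≤ M

/-- Local Lipschitz function on ℝ: `|φ(x) − φ(y)| ≤ C(1+|x|^m+|y|^m)|x−y|`. -/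
def IsLocLip (φ : ℝ → ℝ) : Prop :=
  ∃ (C : ℝ) (m : ℕ), ∀ x y : ℝ, |φ x - φ y| ≤ C * (1 + |x| ^ m + |y| ^ m) * |x - y|

/-- Upper extended negative dependence (finite family) with dominating constant `K`:
`𝔼[∏ g_i(X_i)] ≤ K ∏ 𝔼[g_i(X_i)]` for all non-negative bounded Lipschitz
non-decreasing `g_i`.  (Expectations of bounded functions are finite, whence
the `toReal`.) -/
def UENDFin (SL : SublinearExp Ω) (K : ℝ) {n : ℕ} (X : Fin n → Ω → ℝ) : Prop :=
  ∀ g : Fin n → ℝ → ℝ, (∀ i, IsBLip (g i)) → (∀ i, Monotone (g i)) →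
    (∀ i x, 0 ≤ g i x) →
    SL.E (fun ω => ∏ i, g i (X i ω)) ≤
      ((K * ∏ i, (SL.E fun ω => g i (X i ω)).toReal : ℝ) : EReal)

/-- Upper extended negative dependence for a sequence. -/
def UEND (SL : SublinearExp Ω) (K : ℝ) (X : ℕ → Ω → ℝ) : Prop :=
  ∀ n : ℕ, ∀ g : ℕ → ℝ → ℝ, (∀ i, IsBLip (g i)) → (∀ i, Monotone (g i)) →
    (∀ i x, 0 ≤ g i x) →
    SL.E (fun ω => ∏ i ∈ Finset.range n, g i (X i ω)) ≤
      ((K * ∏ i ∈ Finset.range n, (SL.E fun ω => g i (X i ω)).toReal : ℝ) : EReal)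

/-- Lower extended negative dependence for a sequence. -/
def LEND (SL : SublinearExp Ω) (K : ℝ) (X : ℕ → Ω → ℝ) : Prop :=
  ∀ n : ℕ, ∀ g : ℕ → ℝ → ℝ, (∀ i, IsBLip (g i)) → (∀ i, Antitone (g i)) →
    (∀ i x, 0 ≤ g i x) →
    SL.E (fun ω => ∏ i ∈ Finset.range n, g i (X i ω)) ≤
      ((K * ∏ i ∈ Finset.range n, (SL.E fun ω => g i (X i ω)).toReal : ℝ) : EReal)

/-- Extended negative dependence = upper and lower END. -/
def END (SL : SublinearExp Ω) (K : ℝ) (X : ℕ → Ω → ℝ) : Prop :=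
  UEND SL K X ∧ LEND SL K X

/-- Upper extended negative dependence under the conjugate expectation `ℰ`
(finite family). -/
def UENDFinConj (SL : SublinearExp Ω) (K : ℝ) {n : ℕ} (X : Fin n → Ω → ℝ) : Prop :=
  ∀ g : Fin n → ℝ → ℝ, (∀ i, IsBLip (g i)) → (∀ i, Monotone (g i)) →
    (∀ i x, 0 ≤ g i x) →
    SL.cE (fun ω => ∏ i, g i (X i ω)) ≤
      ((K * ∏ i, (SL.cE fun ω => g i (X i ω)).toReal : ℝ) : EReal)

/-- Upper extended negative dependence under the conjugate expectation (sequence). -/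
def UENDconj (SL : SublinearExp Ω) (K : ℝ) (X : ℕ → Ω → ℝ) : Prop :=
  ∀ n : ℕ, ∀ g : ℕ → ℝ → ℝ, (∀ i, IsBLip (g i)) → (∀ i, Monotone (g i)) →
    (∀ i x, 0 ≤ g i x) →
    SL.cE (fun ω => ∏ i ∈ Finset.range n, g i (X i ω)) ≤
      ((K * ∏ i ∈ Finset.range n, (SL.cE fun ω => g i (X i ω)).toReal : ℝ) : EReal)

/-- Lower extended negative dependence under the conjugate expectation (sequence). -/
def LENDconj (SL : SublinearExp Ω) (K : ℝ) (X : ℕ → Ω → ℝ) : Prop :=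
  ∀ n : ℕ, ∀ g : ℕ → ℝ → ℝ, (∀ i, IsBLip (g i)) → (∀ i, Antitone (g i)) →
    (∀ i x, 0 ≤ g i x) →
    SL.cE (fun ω => ∏ i ∈ Finset.range n, g i (X i ω)) ≤
      ((K * ∏ i ∈ Finset.range n, (SL.cE fun ω => g i (X i ω)).toReal : ℝ) : EReal)

/-- Extended negative dependence under the conjugate expectation. -/
def ENDconj (SL : SublinearExp Ω) (K : ℝ) (X : ℕ → Ω → ℝ) : Prop :=
  UENDconj SL K X ∧ LENDconj SL K X

/-- Extended independence of a sequence: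
`𝔼[∏ ψ_i(X_i)] = ∏ 𝔼[ψ_i(X_i)]` for non-negative local Lipschitz `ψ_i`,
whenever the expectations involved are finite. -/
def ExtIndep (SL : SublinearExp Ω) (X : ℕ → Ω → ℝ) : Prop :=
  ∀ n : ℕ, ∀ ψ : ℕ → ℝ → ℝ, (∀ i, IsLocLip (ψ i)) → (∀ i x, 0 ≤ ψ i x) →
    (∀ i ∈ Finset.range n, SL.E (fun ω => ψ i (X i ω)) ≠ ⊤) →
    SL.E (fun ω => ∏ i ∈ Finset.range n, ψ i (X i ω)) =
      ((∏ i ∈ Finset.range n, (SL.E fun ω => ψ i (X i ω)).toReal : ℝ) : EReal)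

/-- Extended independence of two random variables. -/
def ExtIndepPair (SL : SublinearExp Ω) (Y Z : Ω → ℝ) : Prop :=
  ∀ ψ₁ ψ₂ : ℝ → ℝ, IsLocLip ψ₁ → IsLocLip ψ₂ →
    (∀ x, 0 ≤ ψ₁ x) → (∀ x, 0 ≤ ψ₂ x) →
    SL.E (fun ω => ψ₁ (Y ω)) ≠ ⊤ → SL.E (fun ω => ψ₂ (Z ω)) ≠ ⊤ →
    SL.E (fun ω => ψ₁ (Y ω) * ψ₂ (Z ω)) =
      (((SL.E fun ω => ψ₁ (Y ω)).toReal * (SL.E fun ω => ψ₂ (Z ω)).toReal : ℝ) : EReal)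

/-- Identically distributed: `𝔼[φ(X_i)] = 𝔼[φ(X_1)]` for all local Lipschitz `φ`. -/
def IdentDist (SL : SublinearExp Ω) (X : ℕ → Ω → ℝ) : Prop :=
  ∀ (i : ℕ) (φ : ℝ → ℝ), IsLocLip φ →
    SL.E (fun ω => φ (X i ω)) = SL.E fun ω => φ (X 0 ω)

end SublinearExp

/-- `log x = ln(x ∨ e)`. -/
def paperLog (x : ℝ) : ℝ := Real.log (max x (Real.exp 1))

/-- `a_n = √(2 n log log n)` with the above convention for `log`. -/
def lilA (n : ℕ) : ℝ := Real.sqrt (2 * n * paperLog (paperLog n))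

/-!
Truncate at a level `y > 0`. On `{x ≤ ∑ X k}` either some `X k` exceeds `y`, which by Chebyshev has
capacity at most `B / y ^ 2`, or `x ≤ ∑ min (X k) y`. The functions `exp (t * min · y)` are bounded,
Lipschitz and non-decreasing, so extended negative dependence decouples the exponential moment of
the truncated sum; since `(exp u - 1 - u) / u ^ 2` is non-decreasing, each factor is at most
`exp ((exp (t * y) - 1 - t * y) / y ^ 2 * 𝔼[X k ^ 2])`. Optimizing the resulting Chernoff bound in
`t` gives an inequality of Fuk–Nagaev type, and `y = x` turns its exponential term into
`K * e * B / x ^ 2`. The optimal `t` is infinite when `B = 0`, so the bound is proved for every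
`D > B` in place of `B` and then passed to the limit.
-/

theorem sq_mul_integral_one_sub_mul_exp (y : ℝ) :
    y ^ 2 * ∫ s in (0 : ℝ)..1, (1 - s) * Real.exp (s * y) = Real.exp y - 1 - y := by
  have hderiv : ∀ s ∈ Set.uIcc (0 : ℝ) 1,
      HasDerivAt (fun s => (1 - s) * y * Real.exp (s * y) + Real.exp (s * y))
        (y ^ 2 * ((1 - s) * Real.exp (s * y))) s := fun s _ => by
    have hexp : HasDerivAt (fun s => Real.exp (s * y)) (Real.exp (s * y) * (1 * y)) s :=
      ((hasDerivAt_id s).mul_const y).exp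
    have hlin : HasDerivAt (fun s => (1 - s) * y) (-1 * y) s :=
      ((hasDerivAt_id s).const_sub 1).mul_const y
    exact ((hlin.mul hexp).add hexp).congr_deriv (by ring)
  rw [← intervalIntegral.integral_const_mul,
    intervalIntegral.integral_eq_sub_of_hasDerivAt hderiv
      (Continuous.intervalIntegrable (by fun_prop) _ _)]
  simp only [sub_self, zero_mul, one_mul, zero_add, sub_zero, Real.exp_zero, mul_one]
  ring

theorem sq_mul_exp_sub_one_sub_le {y a : ℝ} (hya : y ≤ a) :
    a ^ 2 * (Real.exp y - 1 - y) ≤ y ^ 2 * (Real.exp a - 1 - a) := by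
  have hmono : ∫ s in (0 : ℝ)..1, (1 - s) * Real.exp (s * y) ≤
      ∫ s in (0 : ℝ)..1, (1 - s) * Real.exp (s * a) := by
    refine intervalIntegral.integral_mono_on zero_le_one
      (Continuous.intervalIntegrable (by fun_prop) _ _)
      (Continuous.intervalIntegrable (by fun_prop) _ _) fun s hs => ?_
    have hs0 := hs.1
    have hs1 : 0 ≤ 1 - s := sub_nonneg.2 hs.2
    gcongr
  rw [← sq_mul_integral_one_sub_mul_exp y, ← sq_mul_integral_one_sub_mul_exp a,
    mul_left_comm]
  gcongr

/-- The coefficient of the quadratic term in Bennett's bound for `exp (t * u)`, `u ≤ y`. It is only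
used for `y ≠ 0`; at `y = 0` Lean's division makes it `0`. -/
def bennettCoeff (t y : ℝ) : ℝ := (Real.exp (t * y) - 1 - t * y) / y ^ 2

theorem bennettCoeff_nonneg (t y : ℝ) : 0 ≤ bennettCoeff t y :=
  div_nonneg (by linarith [Real.add_one_le_exp (t * y)]) (sq_nonneg y)

theorem exp_mul_min_le_one_add_add {t y : ℝ} (ht : 0 < t) (hy : 0 < y) (u : ℝ) :
    Real.exp (t * min u y) ≤ 1 + (t * u + bennettCoeff t y * u ^ 2) := by
  have htrunc :
      Real.exp (t * min u y) - 1 - t * min u y ≤ bennettCoeff t y * min u y ^ 2 := by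
    have h := sq_mul_exp_sub_one_sub_le (mul_le_mul_of_nonneg_left (min_le_right u y) ht.le)
    rw [← le_div_iff₀' (by positivity)] at h
    exact h.trans_eq (by rw [bennettCoeff]; field_simp)
  have hlin : t * min u y ≤ t * u := mul_le_mul_of_nonneg_left (min_le_left u y) ht.le
  have hsq : min u y ^ 2 ≤ u ^ 2 := by
    rcases le_total u y with h | h
    · rw [min_eq_left h]
    · rw [min_eq_right h]
      exact pow_le_pow_left₀ hy.le h 2
  linarith [mul_le_mul_of_nonneg_left hsq (bennettCoeff_nonneg t y)]

theorem lipschitzOnWith_exp_Iic (a : ℝ) :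
    LipschitzOnWith (Real.exp a).toNNReal Real.exp (Set.Iic a) := by
  refine (convex_Iic a).lipschitzOnWith_of_nnnorm_deriv_le (𝕜 := ℝ)
    (fun u _ => Real.differentiableAt_exp) fun u hu => ?_
  rw [Real.deriv_exp, ← NNReal.coe_le_coe, coe_nnnorm, Real.coe_toNNReal _ (Real.exp_pos a).le,
    Real.norm_of_nonneg (Real.exp_pos u).le]
  exact Real.exp_le_exp.2 hu

theorem exists_coe_eq_and_sum_le {ι : Type*} {s : Finset ι} {f : ι → EReal}
    (hf : ∀ i ∈ s, 0 ≤ f i) {B : ℝ} (hB : ∑ i ∈ s, f i ≤ B) :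
    ∃ b : ι → ℝ, (∀ i ∈ s, f i = b i) ∧ ∑ i ∈ s, b i ≤ B := by
  have hcoe : ∀ i ∈ s, f i = (f i).toReal := fun i hi =>
    (EReal.coe_toReal
      (((Finset.single_le_sum hf hi).trans hB).trans_lt (EReal.coe_lt_top B)).ne
      ((EReal.bot_lt_coe 0).trans_le (hf i hi)).ne').symm
  refine ⟨fun i => (f i).toReal, hcoe, EReal.coe_le_coe_iff.1 ?_⟩
  calc ((∑ i ∈ s, (f i).toReal : ℝ) : EReal) = ∑ i ∈ s, ((f i).toReal : EReal) :=
        map_sum (⟨⟨Real.toEReal, EReal.coe_zero⟩, EReal.coe_add⟩ : ℝ →+ EReal) _ s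
    _ = ∑ i ∈ s, f i := (Finset.sum_congr rfl hcoe).symm
    _ ≤ B := hB

namespace SublinearExp

variable {Ω : Type} (SL : SublinearExp Ω)

theorem E_nonneg {f : Ω → ℝ} (hf : ∀ ω, 0 ≤ f ω) : 0 ≤ SL.E f := by
  simpa [SL.const_eq] using SL.mono (fun _ => 0) f hf

theorem E_sum_le {ι : Type*} (s : Finset ι) (f : ι → Ω → ℝ) :
    SL.E (fun ω => ∑ i ∈ s, f i ω) ≤ ∑ i ∈ s, SL.E (f i) := by
  classical
  induction s using Finset.induction_on with
  | empty => simpa using (SL.const_eq 0).le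
  | insert a s ha ih =>
    simp only [Finset.sum_insert ha]
    exact (SL.subadd _ _).trans (add_le_add le_rfl ih)

theorem E_const_mul_le {f : Ω → ℝ} {a c : ℝ} (hc : 0 ≤ c) (hf : SL.E f ≤ a) :
    SL.E (fun ω => c * f ω) ≤ ((c * a : ℝ) : EReal) := by
  rw [SL.pos_homog c hc, EReal.coe_mul]
  exact mul_le_mul_of_nonneg_left hf (EReal.coe_nonneg.2 hc)

/-- The values `𝔼[ξ]`, for `ξ` dominating the indicator of `A`, whose infimum is the upper capacity
of `A`. -/
def dominatingValues (A : Set Ω) : Set ℝ :=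
  {x | ∃ ξ : Ω → ℝ, (∀ ω, A.indicator (fun _ => (1 : ℝ)) ω ≤ ξ ω) ∧ SL.E ξ = (x : EReal)}

theorem dominatingValues_nonempty (A : Set Ω) : (SL.dominatingValues A).Nonempty :=
  ⟨1, fun _ => 1, Set.indicator_le_self' fun _ _ => zero_le_one, SL.const_eq 1⟩

theorem E_nonneg_of_indicator_le {A : Set Ω} {ξ : Ω → ℝ}
    (hξ : ∀ ω, A.indicator (fun _ => (1 : ℝ)) ω ≤ ξ ω) : 0 ≤ SL.E ξ :=
  SL.E_nonneg fun ω => (Set.indicator_nonneg (fun _ _ => zero_le_one) ω).trans (hξ ω)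

theorem dominatingValues_bddBelow (A : Set Ω) : BddBelow (SL.dominatingValues A) := by
  refine ⟨0, ?_⟩
  rintro x ⟨ξ, hξ, hx⟩
  exact EReal.coe_nonneg.1 (hx ▸ SL.E_nonneg_of_indicator_le hξ)

theorem V_le_of_E_le {A : Set Ω} {ξ : Ω → ℝ}
    (hξ : ∀ ω, A.indicator (fun _ => (1 : ℝ)) ω ≤ ξ ω) {c : ℝ} (hc : SL.E ξ ≤ c) : SL.V A ≤ c := by
  have hcoe : ((SL.E ξ).toReal : EReal) = SL.E ξ :=
    EReal.coe_toReal (hc.trans_lt (EReal.coe_lt_top c)).ne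
      ((EReal.bot_lt_coe 0).trans_le (SL.E_nonneg_of_indicator_le hξ)).ne'
  calc SL.V A ≤ (SL.E ξ).toReal :=
        csInf_le (SL.dominatingValues_bddBelow A) ⟨ξ, hξ, hcoe.symm⟩
    _ ≤ c := EReal.coe_le_coe_iff.1 (hcoe.trans_le hc)

theorem V_mono {A A' : Set Ω} (h : A ⊆ A') : SL.V A ≤ SL.V A' := by
  refine le_csInf (SL.dominatingValues_nonempty A') ?_
  rintro x ⟨ξ, hξ, hx⟩
  exact SL.V_le_of_E_le (fun ω =>
    (Set.indicator_le_indicator_of_subset h (fun _ => zero_le_one) ω).trans (hξ ω)) hx.le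

theorem V_union_le (A A' : Set Ω) : SL.V (A ∪ A') ≤ SL.V A + SL.V A' := by
  have hadd : ∀ a ∈ SL.dominatingValues A, ∀ a' ∈ SL.dominatingValues A',
      SL.V (A ∪ A') ≤ a + a' := by
    rintro a ⟨ξ, hξ, ha⟩ a' ⟨ξ', hξ', ha'⟩
    refine SL.V_le_of_E_le (ξ := fun ω => ξ ω + ξ' ω) (fun ω => ?_) ?_
    · have hinter : 0 ≤ (A ∩ A').indicator (fun _ => (1 : ℝ)) ω :=
        Set.indicator_nonneg (fun _ _ => zero_le_one) ω
      have hunion := Set.indicator_union_add_inter_apply (fun _ => (1 : ℝ)) A A' ω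
      linarith [hξ ω, hξ' ω]
    · exact (SL.subadd ξ ξ').trans_eq (by rw [ha, ha', EReal.coe_add])
  rw [← sub_le_iff_le_add]
  refine le_csInf (SL.dominatingValues_nonempty A) fun a ha => ?_
  rw [sub_le_comm]
  exact le_csInf (SL.dominatingValues_nonempty A') fun a' ha' =>
    sub_le_iff_le_add'.2 (hadd a ha a' ha')

theorem V_setOf_le_le_div {f : Ω → ℝ} (hf : ∀ ω, 0 ≤ f ω) {b c : ℝ} (hc : 0 < c)
    (hb : SL.E f ≤ b) : SL.V {ω | c ≤ f ω} ≤ b / c := by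
  rw [div_eq_inv_mul]
  refine SL.V_le_of_E_le (Set.indicator_le' (fun ω hω => ?_) fun ω _ => ?_)
    (SL.E_const_mul_le (inv_nonneg.2 hc.le) hb)
  · exact (le_inv_mul_iff₀ hc).2 ((mul_one c).trans_le hω)
  · exact mul_nonneg (inv_nonneg.2 hc.le) (hf ω)

theorem V_setOf_exists_lt_le_div_sq {ι : Type*} [Fintype ι] {X : ι → Ω → ℝ} {B y : ℝ} (hy : 0 < y)
    (hB : ∑ k, SL.E (fun ω => X k ω ^ 2) ≤ B) :
    SL.V {ω | ∃ k, y < X k ω} ≤ B / y ^ 2 := by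
  have hsub : {ω | ∃ k, y < X k ω} ⊆ {ω | y ^ 2 ≤ ∑ k, X k ω ^ 2} := by
    rintro ω ⟨k, hk⟩
    exact (pow_le_pow_left₀ hy.le hk.le 2).trans
      (Finset.single_le_sum (f := fun k => X k ω ^ 2) (fun _ _ => sq_nonneg _)
        (Finset.mem_univ k))
  exact (SL.V_mono hsub).trans <| SL.V_setOf_le_le_div
    (fun ω => Finset.sum_nonneg fun _ _ => sq_nonneg _) (by positivity)
    ((SL.E_sum_le Finset.univ fun k ω => X k ω ^ 2).trans hB)

theorem V_setOf_le_sum_le_add {ι : Type*} [Fintype ι] (X : ι → Ω → ℝ) (x y : ℝ) :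
    SL.V {ω | x ≤ ∑ k, X k ω} ≤
      SL.V {ω | ∃ k, y < X k ω} + SL.V {ω | x ≤ ∑ k, min (X k ω) y} := by
  refine (SL.V_mono fun ω hω => ?_).trans (SL.V_union_le _ _)
  rcases em (∃ k, y < X k ω) with hlarge | hsmall
  · exact Or.inl hlarge
  · push Not at hsmall
    exact Or.inr (hω.trans_eq (Finset.sum_congr rfl fun k _ => (min_eq_left (hsmall k)).symm))

theorem E_exp_mul_min_le {Y : Ω → ℝ} (hY : SL.E Y ≤ 0) {b : ℝ}
    (hb : SL.E (fun ω => Y ω ^ 2) ≤ b) {t y : ℝ} (ht : 0 < t) (hy : 0 < y) :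
    SL.E (fun ω => Real.exp (t * min (Y ω) y)) ≤
      (Real.exp (bennettCoeff t y * b) : EReal) := by
  set c := bennettCoeff t y
  calc SL.E (fun ω => Real.exp (t * min (Y ω) y))
      ≤ SL.E (fun ω => 1 + (t * Y ω + c * Y ω ^ 2)) :=
        SL.mono _ _ fun ω => exp_mul_min_le_one_add_add ht hy (Y ω)
    _ ≤ SL.E (fun _ => 1) + (SL.E (fun ω => t * Y ω) + SL.E (fun ω => c * Y ω ^ 2)) :=
        (SL.subadd _ _).trans (add_le_add le_rfl (SL.subadd _ _))
    _ ≤ ((1 : ℝ) : EReal) + (((t * 0 : ℝ) : EReal) + ((c * b : ℝ) : EReal)) :=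
        add_le_add (SL.const_eq 1).le
          (add_le_add (SL.E_const_mul_le ht.le hY) (SL.E_const_mul_le (bennettCoeff_nonneg t y) hb))
    _ = ((c * b + 1 : ℝ) : EReal) := by
        rw [← EReal.coe_add, ← EReal.coe_add]
        ring_nf
    _ ≤ Real.exp (c * b) := EReal.coe_le_coe_iff.2 (Real.add_one_le_exp _)

theorem isBLip_exp_mul_min {t : ℝ} (ht : 0 ≤ t) (y : ℝ) :
    IsBLip fun u => Real.exp (t * min u y) := by
  have hle : ∀ u, t * min u y ≤ t * y := fun u =>
    mul_le_mul_of_nonneg_left (min_le_right u y) ht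
  have hlip : LipschitzWith _ fun u => t * min u y :=
    (lipschitzWith_smul t).comp (LipschitzWith.id.min_const y)
  refine ⟨⟨_, lipschitzOnWith_univ.1
    ((lipschitzOnWith_exp_Iic (t * y)).comp hlip.lipschitzOnWith fun u _ => hle u)⟩,
    Real.exp (t * y), fun u => ?_⟩
  rw [Real.abs_exp]
  exact Real.exp_le_exp.2 (hle u)

section UENDFin

variable {SL} {n : ℕ} {X : Fin n → Ω → ℝ} {K : ℝ}

theorem UENDFin.E_prod_le (hX : SL.UENDFin K X) (hK : 0 ≤ K) {g : Fin n → ℝ → ℝ}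
    (hblip : ∀ k, IsBLip (g k)) (hmono : ∀ k, Monotone (g k)) (hnonneg : ∀ k u, 0 ≤ g k u)
    {c : Fin n → ℝ} (hc : ∀ k, SL.E (fun ω => g k (X k ω)) ≤ c k) :
    SL.E (fun ω => ∏ k, g k (X k ω)) ≤ ((K * ∏ k, c k : ℝ) : EReal) := by
  have hE : ∀ k, 0 ≤ SL.E fun ω => g k (X k ω) := fun k => SL.E_nonneg fun ω => hnonneg k _
  refine (hX g hblip hmono hnonneg).trans (EReal.coe_le_coe_iff.2 ?_)
  gcongr with k
  · exact fun k _ => EReal.toReal_nonneg (hE k)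
  · exact EReal.toReal_le_toReal (hc k) ((EReal.bot_lt_coe 0).trans_le (hE k)).ne'
      (EReal.coe_ne_top _)

theorem UENDFin.E_prod_exp_mul_min_le (hX : SL.UENDFin K X) (hK : 0 ≤ K)
    (hmean : ∀ k, SL.E (X k) ≤ 0) {B : ℝ} (hB : ∑ k, SL.E (fun ω => X k ω ^ 2) ≤ B)
    {t y : ℝ} (ht : 0 < t) (hy : 0 < y) :
    SL.E (fun ω => ∏ k, Real.exp (t * min (X k ω) y)) ≤
      ((K * Real.exp (bennettCoeff t y * B) : ℝ) : EReal) := by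
  have hc := bennettCoeff_nonneg t y
  obtain ⟨b, hb, hbB⟩ :=
    exists_coe_eq_and_sum_le (fun k _ => SL.E_nonneg fun ω => sq_nonneg (X k ω)) hB
  refine (hX.E_prod_le hK (fun _ => isBLip_exp_mul_min ht.le y) (fun _ u v huv => ?_)
    (fun _ _ => (Real.exp_pos _).le)
    (fun k => SL.E_exp_mul_min_le (hmean k) (hb k (Finset.mem_univ k)).le ht hy)).trans
    (EReal.coe_le_coe_iff.2 ?_)
  · gcongr
  · rw [← Real.exp_sum, ← Finset.mul_sum]
    gcongr

theorem UENDFin.V_setOf_le_sum_min_le_exp (hX : SL.UENDFin K X) (hK : 0 ≤ K)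
    (hmean : ∀ k, SL.E (X k) ≤ 0) {B : ℝ} (hB : ∑ k, SL.E (fun ω => X k ω ^ 2) ≤ B)
    {t y : ℝ} (ht : 0 < t) (hy : 0 < y) (x : ℝ) :
    SL.V {ω | x ≤ ∑ k, min (X k ω) y} ≤
      K * Real.exp (bennettCoeff t y * B - t * x) := by
  have hsub : {ω | x ≤ ∑ k, min (X k ω) y} ⊆
      {ω | Real.exp (t * x) ≤ ∏ k, Real.exp (t * min (X k ω) y)} := fun ω hω => by
    rw [Set.mem_ofPred_eq, ← Real.exp_sum, ← Finset.mul_sum, Real.exp_le_exp]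
    exact mul_le_mul_of_nonneg_left hω ht.le
  rw [Real.exp_sub, ← mul_div_assoc]
  exact (SL.V_mono hsub).trans <| SL.V_setOf_le_le_div
    (fun ω => Finset.prod_nonneg fun _ _ => (Real.exp_pos _).le) (Real.exp_pos _)
    (hX.E_prod_exp_mul_min_le hK hmean hB ht hy)

theorem UENDFin.fuk_nagaev_inequality (hX : SL.UENDFin K X) (hK : 0 ≤ K)
    (hmean : ∀ k, SL.E (X k) ≤ 0) {B : ℝ} (hB0 : 0 < B) (hB : ∑ k, SL.E (fun ω => X k ω ^ 2) ≤ B)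
    {x y : ℝ} (hx : 0 < x) (hy : 0 < y) :
    SL.V {ω | x ≤ ∑ k, X k ω} ≤ SL.V {ω | ∃ k, y < X k ω} +
      K * Real.exp (x / y - (x / y + B / y ^ 2) * Real.log (1 + x * y / B)) := by
  refine (SL.V_setOf_le_sum_le_add X x y).trans (add_le_add le_rfl ?_)
  have hxyB : 0 < x * y / B := by positivity
  -- The minimizer in `t` of the exponent `bennettCoeff t y * B - t * x`.
  set t := Real.log (1 + x * y / B) / y with ht
  have hty : t * y = Real.log (1 + x * y / B) := div_mul_cancel₀ _ hy.ne'
  have ht0 : 0 < t := div_pos (Real.log_pos (by linarith)) hy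
  refine (hX.V_setOf_le_sum_min_le_exp hK hmean hB ht0 hy x).trans_eq ?_
  rw [bennettCoeff, hty, Real.exp_log (by positivity), ht]
  congr 2
  field_simp
  ring

theorem UENDFin.V_setOf_le_sum_le_of_pos (hX : SL.UENDFin K X) (hK : 0 ≤ K)
    (hmean : ∀ k, SL.E (X k) ≤ 0) {B : ℝ} (hB0 : 0 < B)
    (hB : ∑ k, SL.E (fun ω => X k ω ^ 2) ≤ B) {x : ℝ} (hx : 0 < x) :
    SL.V {ω | x ≤ ∑ k, X k ω} ≤ (1 + K * Real.exp 1) * (B / x ^ 2) := by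
  set L := Real.log (1 + x * x / B) with hL
  have hL0 : 0 ≤ L := Real.log_nonneg (le_add_of_nonneg_right (by positivity))
  have hexpL : Real.exp (-L) ≤ B / x ^ 2 := by
    rw [Real.exp_neg, hL, Real.exp_log (by positivity), ← inv_div (x ^ 2) B, sq]
    gcongr
    linarith
  have hdecay : Real.exp (x / x - (x / x + B / x ^ 2) * L) ≤ Real.exp 1 * (B / x ^ 2) :=
    calc Real.exp (x / x - (x / x + B / x ^ 2) * L) ≤ Real.exp (1 + -L) := by
          rw [div_self hx.ne', Real.exp_le_exp]
          linarith [mul_nonneg (show 0 ≤ B / x ^ 2 by positivity) hL0]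
      _ ≤ Real.exp 1 * (B / x ^ 2) := by
          rw [Real.exp_add]
          gcongr
  calc SL.V {ω | x ≤ ∑ k, X k ω}
      ≤ SL.V {ω | ∃ k, x < X k ω} + K * Real.exp (x / x - (x / x + B / x ^ 2) * L) :=
        hX.fuk_nagaev_inequality hK hmean hB0 hB hx hx
    _ ≤ B / x ^ 2 + K * (Real.exp 1 * (B / x ^ 2)) :=
        add_le_add (SL.V_setOf_exists_lt_le_div_sq hx hB) (mul_le_mul_of_nonneg_left hdecay hK)
    _ = (1 + K * Real.exp 1) * (B / x ^ 2) := by ring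

end UENDFin

end SublinearExp

/-- Theorem 3.1(c), inequality (3.5): Chebyshev-type inequality. -/
theorem stmt4 {Ω : Type} (SL : SublinearExp Ω) (n : ℕ) (X : Fin n → Ω → ℝ)
    (K : ℝ) (hK : 1 ≤ K)
    (hUEND : SublinearExp.UENDFin SL K X)
    (hmean : ∀ k, SL.E (X k) ≤ 0)
    (B : ℝ) (hB : (B : EReal) = ∑ k, SL.E fun ω => (X k ω) ^ 2) :
    ∀ x : ℝ, 0 < x →
      SL.V {ω | x ≤ ∑ k, X k ω} ≤ (1 + K * Real.exp 1) * (B / x ^ 2) := by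
  intro x hx
  have hB0 : 0 ≤ B := EReal.coe_nonneg.1 <| hB ▸
    Finset.sum_nonneg fun k _ => SL.E_nonneg fun ω => sq_nonneg (X k ω)
  have hbound : ∀ D ∈ Set.Ioi B,
      SL.V {ω | x ≤ ∑ k, X k ω} ≤ (1 + K * Real.exp 1) * (D / x ^ 2) := fun D hD =>
    hUEND.V_setOf_le_sum_le_of_pos (zero_le_one.trans hK) hmean (hB0.trans_lt hD)
      (hB ▸ EReal.coe_le_coe_iff.2 (le_of_lt hD)) hx
  have hlim : Tendsto (fun D => (1 + K * Real.exp 1) * (D / x ^ 2)) (nhdsWithin B (Set.Ioi B))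
      (nhds ((1 + K * Real.exp 1) * (B / x ^ 2))) :=
    (Continuous.tendsto (by fun_prop) B).mono_left nhdsWithin_le_nhds
  exact ge_of_tendsto hlim (eventually_nhdsWithin_of_forall hbound)
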